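/- Multiprover parallel repetition for sub-nonsignalling strategies: let G = (P_{X_M}, ω) be an m-prover game with ρ_SNS(G) < 1. For any ν with 0 < ν ≤ 1 − ρ_SNS(G) and any Δ ≥ ρ_SNS(G) + ν, the probability under any sub-nonsignalling strategy of winning at least nΔ out of n parallel games is at most exp(−n·ν²/C_m), where C_m = (2 ln 2)(2(2^{m+1}−3)+1)² depends only on m. (This may be proved assuming the tensorization lemma η_NS(Gⁿ, nδ) = n·η_NS(G,δ) and the approximation lemma η_NS(G,δ) ≤ ρ_SNS(G) + C'_m√((2 ln 2)δ).) -/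

import Mathlib

open Finset

/-- A probability mass function on a finite set. -/
def IsPmf {α : Type*} [Fintype α] (P : α → ℝ) : Prop :=
  (∀ x, 0 ≤ P x) ∧ ∑ x, P x = 1

/-- Marginal (pushforward) of a measure `P` along a map `f`. -/
noncomputable def marg {α β : Type*} [Fintype α] [DecidableEq β]
    (f : α → β) (P : α → ℝ) : β → ℝ :=
  fun y => ∑ x, if f x = y then P x else 0

/-- KL divergence in bits, with the convention `0 · log 0 = 0` (and `x/0 = 0`). -/
noncomputable def klDiv {α : Type*} [Fintype α] (Q P : α → ℝ) : ℝ :=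
  ∑ x, Q x * Real.logb 2 (Q x / P x)

/-- Conditional mutual information `I(a(Z) ∧ b(Z) | c(Z))` in bits, for `Z ∼ T`. -/
noncomputable def condMI {γ α β σ : Type*} [Fintype γ]
    [Fintype α] [Fintype β] [Fintype σ] [DecidableEq α] [DecidableEq β] [DecidableEq σ]
    (T : γ → ℝ) (a : γ → α) (b : γ → β) (c : γ → σ) : ℝ :=
  ∑ z, T z * Real.logb 2
    ((marg (fun w => (a w, b w, c w)) T (a z, b z, c z) * marg c T (c z)) /
     (marg (fun w => (a w, c w)) T (a z, c z) * marg (fun w => (b w, c w)) T (b z, c z)))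

/-- Total variation distance. -/
noncomputable def dvar {α : Type*} [Fintype α] (P Q : α → ℝ) : ℝ :=
  (1/2 : ℝ) * ∑ x, |P x - Q x|

/-- `δ`-approximate nonsignalling distribution: for every proper subset `A ⊊ M` of
provers, `I(Ũ_A ∧ X̃_{A^c} | X̃_A) + D(P̃_{X_M} ‖ P_{X_M}) ≤ δ`. -/
def ApproxNS {ι : Type*} [Fintype ι] [DecidableEq ι] {X U : ι → Type*}
    [∀ i, Fintype (X i)] [∀ i, DecidableEq (X i)]
    [∀ i, Fintype (U i)] [∀ i, DecidableEq (U i)]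
    (PX : (∀ i, X i) → ℝ) (Pt : ((∀ i, U i) × (∀ i, X i)) → ℝ) (δ : ℝ) : Prop :=
  ∀ A : Finset ι, A ≠ Finset.univ →
    condMI Pt (fun z => fun i : {j // j ∈ A} => z.1 i.1)
              (fun z => fun i : {j // j ∉ A} => z.2 i.1)
              (fun z => fun i : {j // j ∈ A} => z.2 i.1)
      + klDiv (marg Prod.snd Pt) PX ≤ δ

/-- The set of expected payoffs achievable by `δ`-approximate nonsignalling
distributions; its supremum is `η_NS(G, δ)`. -/
def etaSet {ι : Type*} [Fintype ι] [DecidableEq ι] (X U : ι → Type*)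
    [∀ i, Fintype (X i)] [∀ i, DecidableEq (X i)]
    [∀ i, Fintype (U i)] [∀ i, DecidableEq (U i)]
    (PX : (∀ i, X i) → ℝ) (ω : (∀ i, X i) → (∀ i, U i) → ℝ) (δ : ℝ) : Set ℝ :=
  {E | ∃ Pt : ((∀ i, U i) × (∀ i, X i)) → ℝ,
    IsPmf Pt ∧ ApproxNS PX Pt δ ∧ E = ∑ z, Pt z * ω z.2 z.1}

/-- A sub-nonsignalling (subnormalized) strategy: for each proper subset `A` of the
provers there is a channel `Q_{U_A|X_A}` dominating the marginal `P_{U_A|X_M}`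
pointwise. -/
def IsSNS {ι : Type*} [Fintype ι] [DecidableEq ι] {X U : ι → Type*}
    [∀ i, Fintype (X i)] [∀ i, DecidableEq (X i)]
    [∀ i, Fintype (U i)] [∀ i, DecidableEq (U i)]
    (K : (∀ i, X i) → (∀ i, U i) → ℝ) : Prop :=
  (∀ x u, 0 ≤ K x u) ∧ (∀ x, ∑ u, K x u ≤ 1) ∧
  ∀ A : Finset ι, A ≠ Finset.univ →
    ∃ Q : (∀ i : {j // j ∈ A}, X i.1) → (∀ i : {j // j ∈ A}, U i.1) → ℝ,
      (∀ xA, IsPmf (Q xA)) ∧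
      ∀ x uA, marg (fun u => fun i : {j // j ∈ A} => u i.1) (K x) uA
                ≤ Q (fun i => x i.1) uA

/-- The set of expected payoffs achievable by sub-nonsignalling strategies;
its supremum is `ρ_SNS(G)`. -/
def snsSet {ι : Type*} [Fintype ι] [DecidableEq ι] (X U : ι → Type*)
    [∀ i, Fintype (X i)] [∀ i, DecidableEq (X i)]
    [∀ i, Fintype (U i)] [∀ i, DecidableEq (U i)]
    (PX : (∀ i, X i) → ℝ) (ω : (∀ i, X i) → (∀ i, U i) → ℝ) : Set ℝ :=
  {E | ∃ K : (∀ i, X i) → (∀ i, U i) → ℝ,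
    IsSNS K ∧ E = ∑ x, PX x * ∑ u, K x u * ω x u}

/-! Let `p` be the probability of winning often. Conditionally on winning, the views of each proper
set of provers have a law at most `1/p` times one in which a channel maps the questions of the set
to its answers. By Jensen's inequality the divergences, round by round, of this conditional law from
the product of the question law and the conditional answer law add up to at most `log (1/p)`.
Truncating a single round of the conditional law by the likelihood ratios of all the proper sets
turns it into a sub-nonsignalling strategy for one game and costs only the sum of the corresponding
total variation distances. Since each round of the conditional law gains `ν` on average over the
value of the game, Pinsker's and the Cauchy–Schwarz inequality bound `log (1/p)` from below. -/

section Pmf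

variable {α : Type*} [Fintype α]

theorem IsPmf.nonempty {P : α → ℝ} (hP : IsPmf P) : Nonempty α := by
  by_contra h
  have := not_nonempty_iff.1 h
  simpa using hP.2

theorem IsPmf.comp_equiv {β : Type*} [Fintype β] {P : α → ℝ} (hP : IsPmf P) (e : β ≃ α) :
    IsPmf fun y => P (e y) :=
  ⟨fun _ => hP.1 _, (e.sum_comp P).trans hP.2⟩

theorem IsPmf.pi {κ : Type*} [Fintype κ] [DecidableEq κ] {P : κ → α → ℝ} (hP : ∀ j, IsPmf (P j)) :
    IsPmf fun x : κ → α => ∏ j, P j (x j) :=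
  ⟨fun _ => prod_nonneg fun j _ => (hP j).1 _, by
    rw [← Fintype.piFinset_univ, ← prod_univ_sum]
    exact prod_eq_one fun j _ => (hP j).2⟩

theorem IsPmf.one_le_of_le_mul {P Q : α → ℝ} (hP : IsPmf P) (hQ : IsPmf Q) {L : ℝ}
    (h : ∀ x, P x ≤ L * Q x) : 1 ≤ L := by
  simpa [← mul_sum, hP.2, hQ.2] using sum_le_sum fun x (_ : x ∈ univ) => h x

end Pmf

section Marginals

variable {α β : Type*} [Fintype α] [DecidableEq β]

theorem sum_marg_mul [Fintype β] (f : α → β) (P : α → ℝ) (g : β → ℝ) :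
    ∑ y, marg f P y * g y = ∑ x, P x * g (f x) := by
  simp only [marg, sum_mul, ite_mul, zero_mul]
  rw [sum_comm]
  simp

theorem sum_marg [Fintype β] (f : α → β) (P : α → ℝ) : ∑ y, marg f P y = ∑ x, P x := by
  simpa using sum_marg_mul f P fun _ => 1

theorem marg_mono {P Q : α → ℝ} (h : ∀ x, P x ≤ Q x) (f : α → β) (y : β) :
    marg f P y ≤ marg f Q y :=
  sum_le_sum fun x _ => by split_ifs <;> simp [h x]

theorem marg_nonneg {P : α → ℝ} (hP : ∀ x, 0 ≤ P x) (f : α → β) (y : β) : 0 ≤ marg f P y := by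
  simpa [marg] using marg_mono hP f y

theorem IsPmf.marg [Fintype β] {P : α → ℝ} (hP : IsPmf P) (f : α → β) : IsPmf (marg f P) :=
  ⟨marg_nonneg hP.1 f, (sum_marg f P).trans hP.2⟩

theorem le_marg {P : α → ℝ} (hP : ∀ x, 0 ≤ P x) (f : α → β) (x : α) : P x ≤ marg f P (f x) := by
  simpa [marg] using single_le_sum (f := fun w => if f w = f x then P w else 0)
    (fun w _ => by split_ifs <;> simp [hP]) (mem_univ x)

theorem exists_ne_zero_of_marg_ne_zero {f : α → β} {P : α → ℝ} {y : β} (h : marg f P y ≠ 0) :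
    ∃ x, f x = y ∧ P x ≠ 0 := by
  simpa [marg] using exists_ne_zero_of_sum_ne_zero h

theorem marg_marg {γ : Type*} [Fintype β] [DecidableEq γ] (f : α → β) (g : β → γ) (P : α → ℝ) :
    marg g (marg f P) = marg (fun x => g (f x)) P := by
  funext y
  simpa [marg] using sum_marg_mul f P fun w => if g w = y then 1 else 0

theorem marg_mul_comp (f : α → β) (P : α → ℝ) (g : β → ℝ) (y : β) :
    marg f (fun x => P x * g (f x)) y = marg f P y * g y := by
  simp only [marg, sum_mul]
  exact sum_congr rfl fun x _ => by split_ifs with h <;> simp [h]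

theorem marg_mul_const (f : α → β) (P : α → ℝ) (c : ℝ) (y : β) :
    marg f (fun x => P x * c) y = marg f P y * c :=
  marg_mul_comp f P (fun _ => c) y

theorem marg_comp_equiv {α' β' : Type*} [Fintype α'] [DecidableEq β'] (e : α' ≃ α) (e' : β ≃ β')
    (f : α → β) (P : α → ℝ) (y : β) :
    marg (fun x => e' (f (e x))) (fun x => P (e x)) (e' y) = marg f P y := by
  simpa [marg] using e.sum_comp fun x => if f x = y then P x else 0

theorem marg_pi {κ : Type*} [Fintype κ] [DecidableEq κ] (f : α → β) (P : κ → α → ℝ) (y : κ → β) :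
    marg (fun (x : κ → α) j => f (x j)) (fun x => ∏ j, P j (x j)) y = ∏ j, marg f (P j) (y j) := by
  simp [marg, prod_univ_sum, Fintype.prod_ite_zero, funext_iff]

end Marginals

section Channels

variable {𝒰 𝒱 𝒳 : Type*}

/-- The joint law `P(x) q(v|x)` of the output and the input of the channel `q` with input law
`P`. The output comes first, as in `ApproxNS`. -/
def jointDist (q : 𝒳 → 𝒱 → ℝ) (P : 𝒳 → ℝ) (w : 𝒱 × 𝒳) : ℝ :=
  P w.2 * q w.2 w.1

theorem jointDist_nonneg {q : 𝒳 → 𝒱 → ℝ} {P : 𝒳 → ℝ} (hP : ∀ x, 0 ≤ P x)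
    (hq : ∀ x v, 0 ≤ q x v) (w : 𝒱 × 𝒳) : 0 ≤ jointDist q P w :=
  mul_nonneg (hP _) (hq _ _)

theorem IsPmf.jointDist [Fintype 𝒱] [Fintype 𝒳] {q : 𝒳 → 𝒱 → ℝ} {P : 𝒳 → ℝ} (hP : IsPmf P)
    (hq : ∀ x, IsPmf (q x)) : IsPmf (jointDist q P) :=
  ⟨jointDist_nonneg hP.1 fun x => (hq x).1, by
    simp only [_root_.jointDist, Fintype.sum_prod_type_right, ← mul_sum, (hq _).2, mul_one, hP.2]⟩

theorem marg_prodMap_id [Fintype 𝒰] [Fintype 𝒳] [DecidableEq 𝒱] [DecidableEq 𝒳] (σ : 𝒰 → 𝒱)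
    (T : 𝒰 × 𝒳 → ℝ) (w : 𝒱 × 𝒳) :
    marg (Prod.map σ id) T w = marg σ (fun u => T (u, w.2)) w.1 := by
  simp only [marg, Fintype.sum_prod_type, Prod.ext_iff, Prod.map_fst, Prod.map_snd, id]
  exact sum_congr rfl fun u _ => by by_cases h : σ u = w.1 <;> simp [h]

theorem marg_id_prodMap [Fintype 𝒱] [Fintype 𝒳] {𝒴 : Type*} [DecidableEq 𝒱] [DecidableEq 𝒴]
    (π : 𝒳 → 𝒴) (T : 𝒱 × 𝒳 → ℝ) (w : 𝒱 × 𝒴) :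
    marg (Prod.map id π) T w = marg π (fun x => T (w.1, x)) w.2 := by
  simp only [marg, Fintype.sum_prod_type_right, Prod.ext_iff, Prod.map_fst, Prod.map_snd, id]
  exact sum_congr rfl fun x _ => by by_cases h : π x = w.2 <;> simp [h]

theorem marg_prodMap_jointDist [Fintype 𝒰] [Fintype 𝒳] [DecidableEq 𝒱] [DecidableEq 𝒳]
    (σ : 𝒰 → 𝒱) (K : 𝒳 → 𝒰 → ℝ) (P : 𝒳 → ℝ) :
    marg (Prod.map σ id) (jointDist K P) = jointDist (fun x => marg σ (K x)) P := by
  funext w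
  rw [marg_prodMap_id]
  simp only [jointDist, mul_comm (P _), marg_mul_const]

theorem marg_prodMap_le_mul_jointDist [Fintype 𝒰] [Fintype 𝒳] [DecidableEq 𝒱] [DecidableEq 𝒳]
    {σ : 𝒰 → 𝒱} {T : 𝒰 × 𝒳 → ℝ} {K : 𝒳 → 𝒰 → ℝ} {q : 𝒳 → 𝒱 → ℝ} {P : 𝒳 → ℝ} {c : ℝ}
    (hP : ∀ x, 0 ≤ P x) (hc : 0 ≤ c) (hT : ∀ z, T z ≤ c * jointDist K P z)
    (hq : ∀ x v, marg σ (K x) v ≤ q x v) (w : 𝒱 × 𝒳) :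
    marg (Prod.map σ id) T w ≤ c * jointDist q P w := by
  calc marg (Prod.map σ id) T w
      ≤ marg (Prod.map σ id) (fun z => jointDist K P z * c) w :=
        marg_mono (fun z => (hT z).trans_eq (mul_comm _ _)) _ _
    _ = c * jointDist (fun x => marg σ (K x)) P w := by
        rw [marg_mul_const, marg_prodMap_jointDist, mul_comm]
    _ ≤ c * jointDist q P w :=
        mul_le_mul_of_nonneg_left (mul_le_mul_of_nonneg_left (hq _ _) (hP _)) hc

variable {α β γ : Type*} [Fintype α] [DecidableEq β] [DecidableEq γ]

theorem marg_pair_le {T : α → ℝ} (hT : ∀ x, 0 ≤ T x) (f : α → β) (g : α → γ) (b : β) (c : γ) :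
    marg (fun x => (f x, g x)) T (b, c) ≤ marg g T c :=
  sum_le_sum fun x _ => by by_cases h : f x = b <;> simp [h, ite_nonneg (hT x) le_rfl]

variable [Fintype β]

theorem sum_marg_pair (f : α → β) (g : α → γ) (T : α → ℝ) (c : γ) :
    ∑ b, marg (fun x => (f x, g x)) T (b, c) = marg g T c := by
  simp only [marg, Prod.mk.injEq]
  rw [sum_comm]
  exact sum_congr rfl fun x _ => by by_cases h : g x = c <;> simp [h]

/-- The conditional distribution of `f` given `g = c` under `T`; it is set to the uniform
distribution where the condition has mass zero, so that it is a channel. -/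
noncomputable def condDist (f : α → β) (g : α → γ) (T : α → ℝ) (c : γ) (b : β) : ℝ :=
  if marg g T c = 0 then 1 / Fintype.card β
  else marg (fun x => (f x, g x)) T (b, c) / marg g T c

theorem isPmf_condDist [Nonempty β] {T : α → ℝ} (hT : ∀ x, 0 ≤ T x) (f : α → β) (g : α → γ)
    (c : γ) : IsPmf (condDist f g T c) := by
  unfold condDist
  split_ifs with h
  · exact ⟨fun _ => by positivity, by simp⟩
  · exact ⟨fun _ => div_nonneg (marg_nonneg hT _ _) (marg_nonneg hT _ _), by
      rw [← sum_div, sum_marg_pair, div_self h]⟩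

theorem condDist_ne_zero {T : α → ℝ} (hT : ∀ x, 0 ≤ T x) {f : α → β} {g : α → γ} {b : β} {c : γ}
    (h : marg (fun x => (f x, g x)) T (b, c) ≠ 0) : condDist f g T c b ≠ 0 := by
  have hpos : 0 < marg (fun x => (f x, g x)) T (b, c) := (marg_nonneg hT _ _).lt_of_ne' h
  have hg : marg g T c ≠ 0 := (hpos.trans_le (marg_pair_le hT f g b c)).ne'
  simpa [condDist, hg] using h

theorem marg_pair_div_condDist_le {T : α → ℝ} (hT : ∀ x, 0 ≤ T x) (f : α → β) (g : α → γ) (b : β)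
    (c : γ) : marg (fun x => (f x, g x)) T (b, c) / condDist f g T c b ≤ marg g T c := by
  by_cases hb : marg (fun x => (f x, g x)) T (b, c) = 0
  · simpa [hb] using marg_nonneg hT g c
  · have hg : marg g T c ≠ 0 := fun h =>
      hb (((marg_pair_le hT f g b c).trans_eq h).antisymm (marg_nonneg hT _ _))
    rw [condDist, if_neg hg, div_div_cancel₀ hb]

end Channels

section RelativeEntropy

variable {α : Type*} [Fintype α] {P Q : α → ℝ}

theorem log_two_mul_klDiv (Q P : α → ℝ) :
    Real.log 2 * klDiv Q P = ∑ x, Q x * Real.log (Q x / P x) := by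
  have h2 : Real.log 2 ≠ 0 := (Real.log_pos one_lt_two).ne'
  simp only [klDiv, mul_sum, Real.logb]
  exact sum_congr rfl fun x _ => by field_simp

theorem sum_sub_min_eq_dvar (hP : IsPmf P) (hQ : IsPmf Q) :
    ∑ x, (P x - min (P x) (Q x)) = dvar P Q := by
  have hpt : ∀ x, P x - min (P x) (Q x) = 1 / 2 * |P x - Q x| + 1 / 2 * (P x - Q x) := fun x => by
    rcases le_total (P x) (Q x) with h | h
    · rw [min_eq_left h, abs_of_nonpos (sub_nonpos.2 h)]
      ring
    · rw [min_eq_right h, abs_of_nonneg (sub_nonneg.2 h)]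
      ring
  simp only [hpt, sum_add_distrib, ← mul_sum, sum_sub_distrib, hP.2, hQ.2, dvar]
  ring

theorem sum_sq_sqrt_sub_sqrt_le_klDiv (hQ : IsPmf Q) (hP : IsPmf P)
    (hac : ∀ x, Q x ≠ 0 → P x ≠ 0) :
    ∑ x, (√(Q x) - √(P x)) ^ 2 ≤ Real.log 2 * klDiv Q P := by
  have hpt : ∀ x, 2 * (Q x - √(Q x) * √(P x)) ≤ Q x * Real.log (Q x / P x) := fun x => by
    rcases (hQ.1 x).eq_or_lt with h | hQx
    · simp [← h]
    have hPx : 0 < P x := (hP.1 x).lt_of_ne' (hac x hQx.ne')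
    have hlog : Real.log (P x / Q x) / 2 ≤ √(P x / Q x) - 1 := by
      rw [← Real.log_sqrt (div_nonneg hPx.le hQx.le)]
      exact Real.log_le_sub_one_of_pos (Real.sqrt_pos.2 (div_pos hPx hQx))
    have hsqrt : Q x * √(P x / Q x) = √(Q x) * √(P x) := by
      rw [Real.sqrt_div hPx.le, mul_div_left_comm, Real.div_sqrt, mul_comm]
    rw [← inv_div, Real.log_inv, ← hsqrt]
    nlinarith [mul_le_mul_of_nonneg_left hlog hQx.le]
  calc ∑ x, (√(Q x) - √(P x)) ^ 2
      = ∑ x, (2 * (Q x - √(Q x) * √(P x)) + (P x - Q x)) := sum_congr rfl fun x _ => by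
        rw [sub_sq, Real.sq_sqrt (hQ.1 x), Real.sq_sqrt (hP.1 x)]
        ring
    _ = ∑ x, 2 * (Q x - √(Q x) * √(P x)) := by
        rw [sum_add_distrib, sum_sub_distrib, hP.2, hQ.2, sub_self, add_zero]
    _ ≤ Real.log 2 * klDiv Q P := by
        rw [log_two_mul_klDiv]
        exact sum_le_sum fun x _ => hpt x

theorem dvar_sq_le_sum_sq_sqrt_sub_sqrt (hP : IsPmf P) (hQ : IsPmf Q) :
    dvar P Q ^ 2 ≤ ∑ x, (√(P x) - √(Q x)) ^ 2 := by
  have hfactor : ∀ x, |P x - Q x| = |√(P x) - √(Q x)| * (√(P x) + √(Q x)) := fun x => by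
    rw [← abs_of_nonneg (by positivity : 0 ≤ √(P x) + √(Q x)), ← abs_mul, mul_comm,
      ← sq_sub_sq, Real.sq_sqrt (hP.1 x), Real.sq_sqrt (hQ.1 x)]
  have hplus : ∑ x, (√(P x) + √(Q x)) ^ 2 ≤ 4 := by
    calc ∑ x, (√(P x) + √(Q x)) ^ 2 ≤ ∑ x, 2 * (P x + Q x) := sum_le_sum fun x _ => by
          simpa only [Real.sq_sqrt (hP.1 x), Real.sq_sqrt (hQ.1 x)] using
            add_sq_le (a := √(P x)) (b := √(Q x))
      _ = 4 := by
          rw [← mul_sum, sum_add_distrib, hP.2, hQ.2]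
          norm_num
  calc dvar P Q ^ 2 = 1 / 4 * (∑ x, |√(P x) - √(Q x)| * (√(P x) + √(Q x))) ^ 2 := by
        simp only [dvar, hfactor]
        ring
    _ ≤ 1 / 4 * ((∑ x, (√(P x) - √(Q x)) ^ 2) * ∑ x, (√(P x) + √(Q x)) ^ 2) := by
        have hcs := sum_mul_sq_le_sq_mul_sq univ (fun x => |√(P x) - √(Q x)|)
          fun x => √(P x) + √(Q x)
        simp only [sq_abs] at hcs
        gcongr
    _ ≤ 1 / 4 * ((∑ x, (√(P x) - √(Q x)) ^ 2) * 4) := by gcongr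
    _ = ∑ x, (√(P x) - √(Q x)) ^ 2 := by ring

/-- Pinsker's inequality with twice the optimal constant, through the Hellinger distance. -/
theorem dvar_sq_le_klDiv (hQ : IsPmf Q) (hP : IsPmf P) (hac : ∀ x, Q x ≠ 0 → P x ≠ 0) :
    dvar Q P ^ 2 ≤ Real.log 2 * klDiv Q P :=
  (dvar_sq_le_sum_sq_sqrt_sub_sqrt hQ hP).trans (sum_sq_sqrt_sub_sqrt_le_klDiv hQ hP hac)

theorem sum_mul_logb_le_logb (hP : IsPmf P) {F : α → ℝ} (hF : ∀ x, P x ≠ 0 → 0 < F x) {c : ℝ}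
    (hc : ∑ x, P x * F x ≤ c) : ∑ x, P x * Real.logb 2 (F x) ≤ Real.logb 2 c := by
  have hsupp : ∀ g : α → ℝ, ∑ x with P x ≠ 0, P x * g x = ∑ x, P x * g x := fun g =>
    sum_filter_of_ne fun x _ => left_ne_zero_of_mul
  have hPne : ∑ x with P x ≠ 0, P x = 1 := (sum_filter_ne_zero univ).trans hP.2
  have hjensen : ∑ x, P x * Real.log (F x) ≤ Real.log (∑ x, P x * F x) := by
    simpa only [smul_eq_mul, hsupp] using
      strictConcaveOn_log_Ioi.concaveOn.le_map_sum (fun x _ => hP.1 x) hPne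
        fun x hx => hF x (mem_filter.1 hx).2
  have hpos : 0 < ∑ x, P x * F x := by
    rw [← hsupp]
    exact sum_pos (fun x hx => mul_pos ((hP.1 x).lt_of_ne' (mem_filter.1 hx).2)
      (hF x (mem_filter.1 hx).2)) (nonempty_of_sum_ne_zero (hPne.trans_ne one_ne_zero))
  simp only [Real.logb, ← mul_div_assoc, ← sum_div]
  exact div_le_div_of_nonneg_right (hjensen.trans (Real.log_le_log hpos hc))
    (Real.log_nonneg one_le_two)

/-- Superadditivity of the divergence against a product reference, with Jensen's inequality in
place of the chain rule. -/
theorem sum_klDiv_marg_le_logb {κ : Type*} [Fintype κ] {β : κ → Type*} [∀ j, Fintype (β j)]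
    [∀ j, DecidableEq (β j)] (hP : IsPmf P) (f : ∀ j, α → β j) {R : ∀ j, β j → ℝ}
    (hR : ∀ j y, 0 ≤ R j y) (hac : ∀ j y, marg (f j) P y ≠ 0 → R j y ≠ 0)
    {L : ℝ} (hL : ∑ x, P x * ∏ j, marg (f j) P (f j x) / R j (f j x) ≤ L) :
    ∑ j, klDiv (marg (f j) P) (R j) ≤ Real.logb 2 L := by
  have hratio : ∀ x, P x ≠ 0 → ∀ j, 0 < marg (f j) P (f j x) / R j (f j x) := fun x hx j => by
    have hmarg : 0 < marg (f j) P (f j x) :=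
      ((hP.1 x).lt_of_ne' hx).trans_le (le_marg hP.1 (f j) x)
    exact div_pos hmarg ((hR j _).lt_of_ne' (hac j _ hmarg.ne'))
  calc ∑ j, klDiv (marg (f j) P) (R j)
      = ∑ x, P x * Real.logb 2 (∏ j, marg (f j) P (f j x) / R j (f j x)) := by
        simp only [klDiv,
          fun j => sum_marg_mul (f j) P fun y => Real.logb 2 (marg (f j) P y / R j y)]
        rw [sum_comm]
        refine sum_congr rfl fun x _ => ?_
        by_cases hx : P x = 0
        · simp [hx]
        · rw [← mul_sum, Real.logb_prod _ _ fun j _ => (hratio x hx j).ne']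
    _ ≤ Real.logb 2 L :=
        sum_mul_logb_le_logb hP (fun x hx => prod_pos fun j _ => hratio x hx j) hL

end RelativeEntropy

section Tensorization

variable {κ 𝒱 𝒳 𝒴 : Type*} [Fintype κ] [Fintype 𝒱] [Fintype 𝒳] [DecidableEq 𝒴]

theorem marg_div_condDist_le [DecidableEq 𝒱] {S : 𝒱 × 𝒳 → ℝ} (hS : ∀ w, 0 ≤ S w) (π : 𝒳 → 𝒴)
    (v : 𝒱) (y : 𝒴) :
    marg π (fun x => S (v, x) / condDist Prod.fst (fun w => π w.2) S (π x) v) y ≤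
      marg (fun w => π w.2) S y := by
  simp only [div_eq_mul_inv]
  rw [marg_mul_comp π (fun x => S (v, x)) fun y =>
    (condDist Prod.fst (fun w => π w.2) S y v)⁻¹, ← div_eq_mul_inv]
  exact marg_id_prodMap π S (v, y) ▸ marg_pair_div_condDist_le hS Prod.fst (fun w => π w.2) v y

variable [DecidableEq κ]

theorem sum_channel_mul_prod_le_one [Fintype 𝒴] (π : 𝒳 → 𝒴) {Q : (κ → 𝒴) → (κ → 𝒱) → ℝ}
    (hQ : ∀ y, IsPmf (Q y)) {g : κ → 𝒱 → 𝒳 → ℝ} (hg : ∀ j v x, 0 ≤ g j v x) {c : κ → 𝒴 → ℝ}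
    (hc : ∀ j, IsPmf (c j)) (hgc : ∀ j v y, marg π (g j v) y ≤ c j y) :
    ∑ w : (κ → 𝒱) × (κ → 𝒳), Q (fun j => π (w.2 j)) w.1 * ∏ j, g j (w.1 j) (w.2 j) ≤ 1 := by
  calc ∑ w : (κ → 𝒱) × (κ → 𝒳), Q (fun j => π (w.2 j)) w.1 * ∏ j, g j (w.1 j) (w.2 j)
      = ∑ v : κ → 𝒱, ∑ y, (∏ j, marg π (g j (v j)) (y j)) * Q y v := by
        rw [Fintype.sum_prod_type]
        refine sum_congr rfl fun v _ => ?_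
        simp only [← marg_pi]
        rw [sum_marg_mul (fun (x : κ → 𝒳) j => π (x j)) _ fun y => Q y v]
        simp only [mul_comm]
    _ ≤ ∑ v, ∑ y, (∏ j, c j (y j)) * Q y v := by
        refine sum_le_sum fun v _ => sum_le_sum fun y _ => ?_
        refine mul_le_mul_of_nonneg_right ?_ ((hQ y).1 v)
        exact prod_le_prod (fun j _ => marg_nonneg (hg j _) _ _) fun j _ => hgc j _ _
    _ = 1 := by
        rw [← ((IsPmf.pi hc).jointDist hQ).2, Fintype.sum_prod_type]
        rfl

variable [DecidableEq 𝒱] [DecidableEq 𝒳]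

/-- The joint law of the output and the input in round `j` under a joint law for all rounds. -/
noncomputable def roundDist (S : (κ → 𝒱) × (κ → 𝒳) → ℝ) (j : κ) : 𝒱 × 𝒳 → ℝ :=
  marg (fun z => (z.1 j, z.2 j)) S

theorem sum_roundDist_mul (S : (κ → 𝒱) × (κ → 𝒳) → ℝ) (j : κ) (F : 𝒱 × 𝒳 → ℝ) :
    ∑ w, roundDist S j w * F w = ∑ z, S z * F (z.1 j, z.2 j) :=
  sum_marg_mul _ S F

theorem IsPmf.roundDist {S : (κ → 𝒱) × (κ → 𝒳) → ℝ} (hS : IsPmf S) (j : κ) :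
    IsPmf (roundDist S j) :=
  hS.marg _

theorem roundDist_marg_prodMap {𝒰 : Type*} [Fintype 𝒰] [DecidableEq 𝒰] (σ : 𝒰 → 𝒱)
    (T : (κ → 𝒰) × (κ → 𝒳) → ℝ) (j : κ) :
    roundDist (marg (Prod.map (fun (u : κ → 𝒰) i => σ (u i)) id) T) j =
      marg (Prod.map σ id) (roundDist T j) := by
  simp only [roundDist, marg_marg]
  rfl

/-- The conditional distribution of the output of round `j` given the image under `π` of its
input. -/
noncomputable def roundChannel (π : 𝒳 → 𝒴) (S : (κ → 𝒱) × (κ → 𝒳) → ℝ) (j : κ) : 𝒴 → 𝒱 → ℝ :=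
  condDist Prod.fst (fun w => π w.2) (roundDist S j)

theorem isPmf_roundChannel (π : 𝒳 → 𝒴) {S : (κ → 𝒱) × (κ → 𝒳) → ℝ} (hS : IsPmf S) (j : κ)
    (y : 𝒴) : IsPmf (roundChannel π S j y) := by
  have : Nonempty 𝒱 := (hS.roundDist j).nonempty.map Prod.fst
  exact isPmf_condDist (hS.roundDist j).1 _ _ y

variable [Finite 𝒴] {P : 𝒳 → ℝ} (hP : IsPmf P) (π : 𝒳 → 𝒴) {Q : (κ → 𝒴) → (κ → 𝒱) → ℝ}
  (hQ : ∀ y, IsPmf (Q y)) {S : (κ → 𝒱) × (κ → 𝒳) → ℝ} (hS : IsPmf S)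

include hP hQ hS

theorem sum_jointDist_mul_prod_div_le_one :
    ∑ z, jointDist (fun x : κ → 𝒳 => Q fun j => π (x j)) (fun x => ∏ j, P (x j)) z *
      ∏ j, roundDist S j (z.1 j, z.2 j) /
        jointDist (fun x => roundChannel π S j (π x)) P (z.1 j, z.2 j) ≤ 1 := by
  have := Fintype.ofFinite 𝒴
  have hS0 : ∀ j w, 0 ≤ roundDist S j w := fun j => (hS.roundDist j).1
  have hq0 : ∀ j y v, 0 ≤ roundChannel π S j y v := fun j y => (isPmf_roundChannel π hS j y).1
  have hcancel : ∀ j w, P w.2 * (roundDist S j w /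
      jointDist (fun x => roundChannel π S j (π x)) P w) ≤
        roundDist S j w / roundChannel π S j (π w.2) w.1 := fun j w => by
    by_cases hx : P w.2 = 0
    · simpa [hx] using div_nonneg (hS0 j w) (hq0 j _ _)
    · rw [jointDist, mul_div_assoc', mul_div_mul_left _ _ hx]
  refine (sum_le_sum fun z _ => ?_).trans (sum_channel_mul_prod_le_one π hQ
    (g := fun j v x => roundDist S j (v, x) / roundChannel π S j (π x) v)
    (fun j v x => div_nonneg (hS0 j _) (hq0 j _ _)) (fun j => (hS.roundDist j).marg _)
    fun j => marg_div_condDist_le (hS0 j) π)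
  rw [jointDist, mul_right_comm, ← prod_mul_distrib, mul_comm]
  refine mul_le_mul_of_nonneg_left (prod_le_prod (fun j _ => ?_)
    fun j _ => hcancel j (z.1 j, z.2 j)) ((hQ _).1 _)
  exact mul_nonneg (hP.1 _) (div_nonneg (hS0 j _) (jointDist_nonneg hP.1 (fun _ => hq0 j _) _))

theorem sum_dvar_roundDist_sq_le_log {L : ℝ}
    (hdom : ∀ z, S z ≤
      L * jointDist (fun x : κ → 𝒳 => Q fun j => π (x j)) (fun x => ∏ j, P (x j)) z) :
    ∑ j, dvar (roundDist S j) (jointDist (fun x => roundChannel π S j (π x)) P) ^ 2 ≤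
      Real.log L := by
  set R : κ → 𝒱 × 𝒳 → ℝ := fun j => jointDist (fun x => roundChannel π S j (π x)) P
  have hR : ∀ j, IsPmf (R j) := fun j => hP.jointDist fun x => isPmf_roundChannel π hS j (π x)
  have hL : 0 < L := zero_lt_one.trans_le <|
    hS.one_le_of_le_mul ((IsPmf.pi fun _ => hP).jointDist fun _ => hQ _) hdom
  have hac : ∀ j w, roundDist S j w ≠ 0 → R j w ≠ 0 := fun j w hw => by
    obtain ⟨z, rfl, hz⟩ := exists_ne_zero_of_marg_ne_zero hw
    have hPz : P (z.2 j) ≠ 0 := fun h => hz <| ((hdom z).trans_eq (by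
      rw [jointDist, prod_eq_zero (mem_univ j) h, zero_mul, mul_zero])).antisymm (hS.1 z)
    have hpos := ((hS.roundDist j).1 _).lt_of_ne' hw
    exact mul_ne_zero hPz (condDist_ne_zero (hS.roundDist j).1
      (hpos.trans_le (le_marg (hS.roundDist j).1 (fun w => (w.1, π w.2)) _)).ne')
  have hsum : ∑ z, S z * ∏ j, roundDist S j (z.1 j, z.2 j) / R j (z.1 j, z.2 j) ≤ L := by
    refine (sum_le_sum fun z _ => mul_le_mul_of_nonneg_right (hdom z) <|
      prod_nonneg fun j _ => div_nonneg ((hS.roundDist j).1 _) ((hR j).1 _)).trans ?_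
    simp only [mul_assoc, ← mul_sum]
    exact mul_le_of_le_one_right hL.le (sum_jointDist_mul_prod_div_le_one hP π hQ hS)
  calc ∑ j, dvar (roundDist S j) (R j) ^ 2
      ≤ Real.log 2 * ∑ j, klDiv (roundDist S j) (R j) := by
        rw [mul_sum]
        exact sum_le_sum fun j _ => dvar_sq_le_klDiv (hS.roundDist j) (hR j) (hac j)
    _ ≤ Real.log 2 * Real.logb 2 L :=
        mul_le_mul_of_nonneg_left (sum_klDiv_marg_le_logb hS _ (fun j => (hR j).1) hac hsum)
          (Real.log_nonneg one_le_two)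
    _ = Real.log L := mul_div_cancel₀ _ (Real.log_pos one_lt_two).ne'

end Tensorization

section Truncation

theorem mul_min_one_div {a R : ℝ} (ha : 0 ≤ a) (hR : 0 ≤ R) : a * min 1 (R / a) = min a R := by
  rcases ha.eq_or_lt with rfl | h
  · simp [hR]
  · rw [mul_min_of_nonneg _ _ ha, mul_one, mul_div_cancel₀ _ h.ne']

/-- Multiplying `T` by the least of its likelihood ratios truncated at `1` loses at most the sum of
the losses of the single truncations. -/
theorem exists_le_marg_le {α 𝒜 : Type*} {β : 𝒜 → Type*} [Fintype α] [Fintype 𝒜]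
    [Nonempty 𝒜] [∀ A, Fintype (β A)] [∀ A, DecidableEq (β A)] {T : α → ℝ} (hT : IsPmf T)
    (f : ∀ A, α → β A) {R : ∀ A, β A → ℝ} (hR : ∀ A, IsPmf (R A)) :
    ∃ S : α → ℝ, (∀ z, 0 ≤ S z) ∧ (∀ z, S z ≤ T z) ∧ (∀ A y, marg (f A) S y ≤ R A y) ∧
      ∑ z, (T z - S z) ≤ ∑ A, dvar (marg (f A) T) (R A) := by
  set g : ∀ A, β A → ℝ := fun A y => min 1 (R A y / marg (f A) T y)
  have hg0 : ∀ A y, 0 ≤ g A y := fun A y =>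
    le_min zero_le_one (div_nonneg ((hR A).1 y) (marg_nonneg hT.1 _ _))
  have hg1 : ∀ A y, g A y ≤ 1 := fun A y => min_le_left _ _
  have hmul : ∀ A y, marg (f A) T y * g A y = min (marg (f A) T y) (R A y) := fun A y =>
    mul_min_one_div (marg_nonneg hT.1 _ _) ((hR A).1 y)
  have hle : ∀ z A, ⨅ B, g B (f B z) ≤ g A (f A z) := fun z A =>
    ciInf_le (Set.finite_range _).bddBelow A
  have hloss : ∀ z, 1 - ⨅ B, g B (f B z) ≤ ∑ A, (1 - g A (f A z)) := fun z => by
    obtain ⟨A, hA⟩ := exists_eq_ciInf_of_finite (f := fun B => g B (f B z))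
    rw [← hA]
    exact single_le_sum (f := fun A => 1 - g A (f A z))
      (fun B _ => sub_nonneg.2 (hg1 B _)) (mem_univ A)
  refine ⟨fun z => T z * ⨅ B, g B (f B z), fun z => mul_nonneg (hT.1 z) (le_ciInf fun A => hg0 A _),
    fun z => mul_le_of_le_one_right (hT.1 z) ((hle z (Classical.arbitrary 𝒜)).trans (hg1 _ _)),
    fun A y => ?_, ?_⟩
  · calc marg (f A) (fun z => T z * ⨅ B, g B (f B z)) y
        ≤ marg (f A) (fun z => T z * g A (f A z)) y :=
          marg_mono (fun z => mul_le_mul_of_nonneg_left (hle z A) (hT.1 z)) _ _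
      _ = min (marg (f A) T y) (R A y) := (marg_mul_comp _ _ _ _).trans (hmul A y)
      _ ≤ R A y := min_le_right _ _
  · calc ∑ z, (T z - T z * ⨅ B, g B (f B z))
        ≤ ∑ z, ∑ A, T z * (1 - g A (f A z)) := sum_le_sum fun z _ => by
          rw [← mul_one_sub, ← mul_sum]
          exact mul_le_mul_of_nonneg_left (hloss z) (hT.1 z)
      _ = ∑ A, ∑ y, marg (f A) T y * (1 - g A y) := by
          rw [sum_comm]
          exact sum_congr rfl fun A _ => (sum_marg_mul (f A) T fun y => 1 - g A y).symm
      _ = ∑ A, dvar (marg (f A) T) (R A) := sum_congr rfl fun A _ => by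
          simp only [mul_one_sub, hmul, sum_sub_min_eq_dvar (hT.marg (f A)) (hR A)]

end Truncation

section Domination

variable {𝒜 𝒰 𝒳 : Type*} {𝒱 𝒴 : 𝒜 → Type*} [Fintype 𝒰] [∀ A, DecidableEq (𝒱 A)]

/-- A subnormalized kernel `K` such that, for each `A`, its output seen through `σ A` is dominated
by a channel acting on its input seen through `π A`. A sub-nonsignalling strategy is the case where
`σ A` and `π A` are the restrictions to the provers in `A`. -/
def IsDominated [∀ A, Fintype (𝒱 A)] (σ : ∀ A, 𝒰 → 𝒱 A) (π : ∀ A, 𝒳 → 𝒴 A)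
    (K : 𝒳 → 𝒰 → ℝ) : Prop :=
  (∀ x u, 0 ≤ K x u) ∧ ∀ A, ∃ Q : 𝒴 A → 𝒱 A → ℝ, (∀ y, IsPmf (Q y)) ∧
    ∀ x v, marg (σ A) (K x) v ≤ Q (π A x) v

/-- The supremum of the expected payoffs of dominated kernels; it abstracts `ρ_SNS(G)`. -/
noncomputable def dominatedValue [Fintype 𝒳] [∀ A, Fintype (𝒱 A)] (σ : ∀ A, 𝒰 → 𝒱 A)
    (π : ∀ A, 𝒳 → 𝒴 A) (P : 𝒳 → ℝ) (ω : 𝒳 → 𝒰 → ℝ) : ℝ :=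
  sSup {E | ∃ K, IsDominated σ π K ∧ E = ∑ x, P x * ∑ u, K x u * ω x u}

variable [∀ A, Fintype (𝒱 A)] {σ : ∀ A, 𝒰 → 𝒱 A} {π : ∀ A, 𝒳 → 𝒴 A}
  [Nonempty 𝒜]

theorem IsDominated.sum_le_one {K : 𝒳 → 𝒰 → ℝ} (hK : IsDominated σ π K) (x : 𝒳) :
    ∑ u, K x u ≤ 1 := by
  obtain ⟨Q, hQ, hle⟩ := hK.2 (Classical.arbitrary 𝒜)
  rw [← sum_marg (σ (Classical.arbitrary 𝒜)) (K x)]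
  exact (sum_le_sum fun v _ => hle x v).trans_eq (hQ _).2

variable [Fintype 𝒳] {P : 𝒳 → ℝ} {ω : 𝒳 → 𝒰 → ℝ} (hP : IsPmf P) (hω : ∀ x u, ω x u ≤ 1)

include hP hω

theorem IsDominated.sum_le_dominatedValue {K : 𝒳 → 𝒰 → ℝ} (hK : IsDominated σ π K) :
    ∑ x, P x * ∑ u, K x u * ω x u ≤ dominatedValue σ π P ω := by
  refine le_csSup ⟨1, ?_⟩ ⟨K, hK, rfl⟩
  rintro _ ⟨K, hK, rfl⟩
  refine (sum_le_sum fun x _ => mul_le_of_le_one_right (hP.1 x) ?_).trans_eq hP.2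
  exact (sum_le_sum fun u _ => mul_le_of_le_one_right (hK.1 x u) (hω x u)).trans (hK.sum_le_one x)

variable [DecidableEq 𝒳]

theorem sum_mul_le_dominatedValue {S : 𝒰 × 𝒳 → ℝ} (hS : ∀ z, 0 ≤ S z)
    {q : ∀ A, 𝒴 A → 𝒱 A → ℝ} (hq : ∀ A y, IsPmf (q A y))
    (hdom : ∀ A w, marg (Prod.map (σ A) id) S w ≤ jointDist (fun x => q A (π A x)) P w) :
    ∑ z, S z * ω z.2 z.1 ≤ dominatedValue σ π P ω := by
  have hzero : ∀ x u, P x = 0 → S (u, x) = 0 := fun x u hx => by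
    have A := Classical.arbitrary 𝒜
    have hSw := (le_marg hS (Prod.map (σ A) id) (u, x)).trans (hdom A _)
    simp only [jointDist, Prod.map_snd, id, hx, zero_mul] at hSw
    exact hSw.antisymm (hS _)
  have hK : IsDominated σ π fun x u => S (u, x) / P x := by
    refine ⟨fun x u => div_nonneg (hS _) (hP.1 x), fun A => ⟨q A, hq A, fun x v => ?_⟩⟩
    have hAv := hdom A (v, x)
    rw [marg_prodMap_id] at hAv
    simp only [div_eq_mul_inv, marg_mul_const]
    rcases (hP.1 x).eq_or_lt with hx | hx
    · simpa [← hx] using (hq A _).1 v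
    · exact mul_inv_le_of_le_mul₀ hx.le ((hq A _).1 v) (hAv.trans_eq (mul_comm _ _))
  refine le_trans (le_of_eq ?_) (hK.sum_le_dominatedValue hP hω)
  rw [Fintype.sum_prod_type_right]
  refine sum_congr rfl fun x _ => ?_
  rw [mul_sum]
  refine sum_congr rfl fun u _ => ?_
  rw [← mul_assoc, mul_div_cancel_of_imp' fun hx => hzero x u hx]

theorem sum_mul_le_dominatedValue_add_sum_dvar [Fintype 𝒜] {T : 𝒰 × 𝒳 → ℝ} (hT : IsPmf T)
    {q : ∀ A, 𝒴 A → 𝒱 A → ℝ} (hq : ∀ A y, IsPmf (q A y)) :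
    ∑ z, T z * ω z.2 z.1 ≤ dominatedValue σ π P ω +
      ∑ A, dvar (marg (Prod.map (σ A) id) T) (jointDist (fun x => q A (π A x)) P) := by
  obtain ⟨S, hS0, hST, hSdom, hloss⟩ := exists_le_marg_le hT (fun A => Prod.map (σ A) id)
    fun A => hP.jointDist fun x => hq A (π A x)
  calc ∑ z, T z * ω z.2 z.1 = ∑ z, S z * ω z.2 z.1 + ∑ z, (T z - S z) * ω z.2 z.1 := by
        simp only [sub_mul, sum_sub_distrib, add_sub_cancel]
    _ ≤ _ := add_le_add (sum_mul_le_dominatedValue hP hω hS0 hq hSdom) <|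
        (sum_le_sum fun z _ => mul_le_of_le_one_right (sub_nonneg.2 (hST z)) (hω _ _)).trans hloss

end Domination

section Repetition

theorem card_mul_sq_le_of_sum_sq_le {𝒜 κ : Type*} [Fintype 𝒜] [Fintype κ] {d : 𝒜 → κ → ℝ}
    {ν ℓ : ℝ} (hν : 0 ≤ ν) (hsum : Fintype.card κ * ν ≤ ∑ A, ∑ j, d A j)
    (hsq : ∀ A, ∑ j, d A j ^ 2 ≤ ℓ) : Fintype.card κ * ν ^ 2 ≤ Fintype.card 𝒜 ^ 2 * ℓ := by
  have hsq' : ∑ A, ∑ j, d A j ^ 2 ≤ Fintype.card 𝒜 * ℓ := by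
    simpa using sum_le_sum fun A (_ : A ∈ univ) => hsq A
  have hcs : (∑ A, ∑ j, d A j) ^ 2 ≤
      Fintype.card 𝒜 * Fintype.card κ * ∑ A, ∑ j, d A j ^ 2 := by
    simpa [Fintype.sum_prod_type] using
      sq_sum_le_card_mul_sum_sq (s := univ) (f := fun p : 𝒜 × κ => d p.1 p.2)
  rcases (Nat.cast_nonneg' (Fintype.card κ) : (0 : ℝ) ≤ _).eq_or_lt with hκ | hκ
  · rw [← hκ, zero_mul, sq, mul_assoc]
    have hℓ : 0 ≤ Fintype.card 𝒜 * ℓ :=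
      (sum_nonneg fun A _ => sum_nonneg fun j _ => sq_nonneg (d A j)).trans hsq'
    positivity
  · refine le_of_mul_le_mul_left ?_ hκ
    calc (Fintype.card κ : ℝ) * (Fintype.card κ * ν ^ 2) = (Fintype.card κ * ν) ^ 2 := by ring
      _ ≤ (∑ A, ∑ j, d A j) ^ 2 := pow_le_pow_left₀ (by positivity) hsum 2
      _ ≤ Fintype.card 𝒜 * Fintype.card κ * (Fintype.card 𝒜 * ℓ) :=
        hcs.trans (by gcongr)
      _ = Fintype.card κ * (Fintype.card 𝒜 ^ 2 * ℓ) := by ring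

theorem exists_isPmf_le_inv_mul {α : Type*} [Fintype α] {J F : α → ℝ} (hJ : ∀ z, 0 ≤ J z) {c : ℝ}
    (hp : 0 < ∑ z, if c ≤ F z then J z else 0) :
    ∃ T : α → ℝ, IsPmf T ∧ (∀ z, T z ≤ (∑ z, if c ≤ F z then J z else 0)⁻¹ * J z) ∧
      c ≤ ∑ z, T z * F z := by
  set p := ∑ z, if c ≤ F z then J z else 0
  have hT : IsPmf fun z => p⁻¹ * if c ≤ F z then J z else 0 :=
    ⟨fun z => mul_nonneg (inv_nonneg.2 hp.le) (ite_nonneg (hJ z) le_rfl), by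
      rw [← mul_sum, inv_mul_cancel₀ hp.ne']⟩
  refine ⟨_, hT, fun z => mul_le_mul_of_nonneg_left ?_ (inv_nonneg.2 hp.le), ?_⟩
  · split_ifs
    exacts [le_rfl, hJ z]
  · calc c = ∑ z, (p⁻¹ * if c ≤ F z then J z else 0) * c := by rw [← sum_mul, hT.2, one_mul]
      _ ≤ ∑ z, (p⁻¹ * if c ≤ F z then J z else 0) * F z := sum_le_sum fun z _ => by
        by_cases h : c ≤ F z
        · exact mul_le_mul_of_nonneg_left h (hT.1 z)
        · simp [h]

variable {𝒜 κ 𝒰 𝒳 : Type*} {𝒱 𝒴 : 𝒜 → Type*} [Fintype 𝒜] [Nonempty 𝒜] [Fintype κ] [DecidableEq κ]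
  [Fintype 𝒰] [Fintype 𝒳] [∀ A, Fintype (𝒱 A)] [∀ A, DecidableEq (𝒱 A)] [∀ A, Finite (𝒴 A)]
  {σ : ∀ A, 𝒰 → 𝒱 A} {π : ∀ A, 𝒳 → 𝒴 A}
  {P : 𝒳 → ℝ} (hP : IsPmf P) {ω : 𝒳 → 𝒰 → ℝ} (hω : ∀ x u, ω x u ≤ 1) {ν : ℝ} (hν : 0 ≤ ν)

include hP hω hν

theorem card_mul_sq_le_card_sq_mul_log [DecidableEq 𝒳] {T : (κ → 𝒰) × (κ → 𝒳) → ℝ}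
    (hT : IsPmf T) {L : ℝ} {Q : ∀ A, (κ → 𝒴 A) → (κ → 𝒱 A) → ℝ} (hQ : ∀ A y, IsPmf (Q A y))
    (hdom : ∀ A w, marg (Prod.map (fun (u : κ → 𝒰) j => σ A (u j)) id) T w ≤
      L * jointDist (fun x => Q A fun j => π A (x j)) (fun x => ∏ j, P (x j)) w)
    (hwin : Fintype.card κ * (dominatedValue σ π P ω + ν) ≤
      ∑ z, T z * ∑ j, ω (z.2 j) (z.1 j)) :
    Fintype.card κ * ν ^ 2 ≤ Fintype.card 𝒜 ^ 2 * Real.log L := by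
  classical
  set S : ∀ A, (κ → 𝒱 A) × (κ → 𝒳) → ℝ := fun A =>
    marg (Prod.map (fun (u : κ → 𝒰) j => σ A (u j)) id) T
  have hS : ∀ A, IsPmf (S A) := fun A => hT.marg _
  have hround : ∀ j, ∑ w, roundDist T j w * ω w.2 w.1 ≤ dominatedValue σ π P ω +
      ∑ A, dvar (roundDist (S A) j) (jointDist (fun x => roundChannel (π A) (S A) j (π A x)) P) :=
    fun j => by
      simpa only [S, roundDist_marg_prodMap] using sum_mul_le_dominatedValue_add_sum_dvar hP hω
        (hT.roundDist j) fun A y => isPmf_roundChannel (π A) (hS A) j y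
  have hgap : ∑ z, T z * ∑ j, ω (z.2 j) (z.1 j) ≤ Fintype.card κ * dominatedValue σ π P ω +
      ∑ A, ∑ j,
        dvar (roundDist (S A) j) (jointDist (fun x => roundChannel (π A) (S A) j (π A x)) P) := by
    simp only [mul_sum]
    rw [sum_comm]
    simp only [← sum_roundDist_mul T _ fun w => ω w.2 w.1]
    refine (sum_le_sum fun j _ => hround j).trans_eq ?_
    rw [sum_add_distrib, sum_comm, sum_const, card_univ, nsmul_eq_mul]
  exact card_mul_sq_le_of_sum_sq_le hν (by linarith) fun A =>
    sum_dvar_roundDist_sq_le_log hP (π A) (hQ A) (hS A) (hdom A)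

theorem IsDominated.sum_win_le_exp {Δ : ℝ} (hΔ : dominatedValue σ π P ω + ν ≤ Δ)
    {K : (κ → 𝒳) → (κ → 𝒰) → ℝ}
    (hK : IsDominated (fun A (u : κ → 𝒰) j => σ A (u j)) (fun A x j => π A (x j)) K) :
    ∑ z : (κ → 𝒰) × (κ → 𝒳), (if Fintype.card κ * Δ ≤ ∑ j, ω (z.2 j) (z.1 j) then
        jointDist K (fun x => ∏ j, P (x j)) z else 0) ≤
      Real.exp (-(Fintype.card κ * ν ^ 2 / Fintype.card 𝒜 ^ 2)) := by
  classical
  have hPκ : IsPmf fun x : κ → 𝒳 => ∏ j, P (x j) := IsPmf.pi fun _ => hP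
  rcases le_or_gt (∑ z : (κ → 𝒰) × (κ → 𝒳), if Fintype.card κ * Δ ≤ ∑ j, ω (z.2 j) (z.1 j) then
    jointDist K (fun x => ∏ j, P (x j)) z else 0) 0 with hp | hp
  · exact hp.trans (Real.exp_pos _).le
  obtain ⟨T, hT, hTle, hwin⟩ := exists_isPmf_le_inv_mul (jointDist_nonneg hPκ.1 hK.1) hp
  choose Q hQ hKQ using hK.2
  have hlog := card_mul_sq_le_card_sq_mul_log hP hω hν hT hQ
    (fun A => marg_prodMap_le_mul_jointDist hPκ.1 (inv_nonneg.2 hp.le) hTle (hKQ A))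
    ((mul_le_mul_of_nonneg_left hΔ (Nat.cast_nonneg _)).trans hwin)
  have h𝒜 : (0 : ℝ) < Fintype.card 𝒜 ^ 2 := by positivity
  rw [Real.log_inv, mul_neg, le_neg] at hlog
  rw [← Real.log_le_iff_le_exp hp, ← neg_div, le_div_iff₀ h𝒜, mul_comm]
  exact hlog

end Repetition

section SubNonsignalling

/-- The index of the views of a sub-nonsignalling strategy: the proper sets of provers. The empty
set, whose constraint is subnormalization, is included also when there are no provers. -/
abbrev ConstrainedSet (ι : Type*) [Fintype ι] : Type _ :=
  {A : Finset ι // A ≠ univ ∨ A = ∅}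

instance (ι : Type*) [Fintype ι] : Nonempty (ConstrainedSet ι) :=
  ⟨⟨∅, Or.inr rfl⟩⟩

variable {ι : Type*} [Fintype ι] [DecidableEq ι]

theorem card_constrainedSet_le : Fintype.card (ConstrainedSet ι) ≤ 2 ^ Fintype.card ι :=
  (Fintype.card_subtype_le _).trans_eq Fintype.card_finset

variable {X U : ι → Type*} [∀ i, Fintype (X i)] [∀ i, DecidableEq (X i)] [∀ i, Fintype (U i)]
  [∀ i, DecidableEq (U i)]

theorem isSNS_iff_isDominated {K : (∀ i, X i) → (∀ i, U i) → ℝ} :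
    IsSNS K ↔ IsDominated (fun A : ConstrainedSet ι => A.1.restrict) (fun A => A.1.restrict) K := by
  refine ⟨fun ⟨hK0, hK1, hK⟩ => ⟨hK0, ?_⟩, fun hK => ⟨hK.1, hK.sum_le_one, fun A hA =>
    hK.2 ⟨A, Or.inl hA⟩⟩⟩
  rintro ⟨A, hA | rfl⟩
  · exact hK A hA
  · refine ⟨fun _ _ => 1, fun _ => ⟨fun _ => zero_le_one, by simp⟩, fun x v => ?_⟩
    refine (single_le_sum (fun w _ => marg_nonneg (hK0 x) _ w) (mem_univ v)).trans ?_
    rw [sum_marg]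
    exact hK1 x

theorem sSup_snsSet_eq_dominatedValue (P : (∀ i, X i) → ℝ) (ω : (∀ i, X i) → (∀ i, U i) → ℝ) :
    sSup (snsSet X U P ω) =
      dominatedValue (fun A : ConstrainedSet ι => A.1.restrict) (fun A => A.1.restrict) P ω := by
  simp only [snsSet, dominatedValue, isSNS_iff_isDominated]

theorem IsSNS.isDominated_swap {κ : Type*} [Fintype κ] [DecidableEq κ]
    {K : (∀ i, κ → X i) → (∀ i, κ → U i) → ℝ} (hK : IsSNS K) :
    IsDominated (fun (A : ConstrainedSet ι) (u : κ → ∀ i, U i) j => A.1.restrict (u j))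
      (fun A (x : κ → ∀ i, X i) j => A.1.restrict (x j))
      fun x u => K (fun i j => x j i) fun i j => u j i := by
  refine ⟨fun x u => hK.1 _ _, fun A => ?_⟩
  obtain ⟨Q, hQ, hKQ⟩ := (isSNS_iff_isDominated.1 hK).2 A
  refine ⟨fun y v => Q (fun i j => y j i) fun i j => v j i, fun y =>
    (hQ _).comp_equiv (Equiv.piComm fun (_ : κ) (i : A.1) => U i), fun x v => ?_⟩
  refine le_trans (le_of_eq ?_) (hKQ (fun i j => x j i) fun i j => v j i)
  exact marg_comp_equiv (Equiv.piComm fun (_ : κ) i => U i)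
    (Equiv.piComm fun (i : A.1) (_ : κ) => U i) A.1.restrict (K fun i j => x j i)
    (fun i j => v j i)

theorem multiprover_parallel_repetition_general {P : (∀ i, X i) → ℝ} (hP : IsPmf P)
    {ω : (∀ i, X i) → (∀ i, U i) → ℝ} (hω : ∀ x u, ω x u ≤ 1) {ν : ℝ} (hν : 0 ≤ ν) {Δ : ℝ}
    (hΔ : sSup (snsSet X U P ω) + ν ≤ Δ) {n : ℕ}
    {K : (∀ i, Fin n → X i) → (∀ i, Fin n → U i) → ℝ} (hK : IsSNS K) :
    ∑ z : (∀ i, Fin n → U i) × (∀ i, Fin n → X i),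
        (if (n : ℝ) * Δ ≤ ∑ j, ω (fun i => z.2 i j) (fun i => z.1 i j) then
          (∏ j, P (fun i => z.2 i j)) * K z.2 z.1 else 0)
      ≤ Real.exp (-(n * ν ^ 2 / 4 ^ Fintype.card ι)) := by
  rw [sSup_snsSet_eq_dominatedValue] at hΔ
  rw [← ((Equiv.piComm fun (_ : Fin n) i => U i).prodCongr
    (Equiv.piComm fun (_ : Fin n) i => X i)).sum_comp]
  have hwin := hK.isDominated_swap.sum_win_le_exp hP hω hν hΔ
  rw [Fintype.card_fin] at hwin
  refine hwin.trans (Real.exp_le_exp.2 (neg_le_neg ?_))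
  have hcard : (Fintype.card (ConstrainedSet ι) : ℝ) ^ 2 ≤ 4 ^ Fintype.card ι := by
    calc (Fintype.card (ConstrainedSet ι) : ℝ) ^ 2 ≤ (2 ^ Fintype.card ι) ^ 2 := by
          gcongr
          exact_mod_cast card_constrainedSet_le (ι := ι)
      _ = 4 ^ Fintype.card ι := by
          rw [pow_right_comm]
          norm_num
  gcongr

end SubNonsignalling

theorem four_pow_le_two_mul_log_two_mul_sq (m : ℕ) :
    (4 : ℝ) ^ m ≤ (2 * Real.log 2) * (2 * (2 ^ (m + 1) - 3) + 1) ^ 2 := by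
  have hfactor : 0 ≤ ((2 : ℝ) ^ m - 1) * (3 * 2 ^ m - 5) := by
    rcases m.eq_zero_or_pos with rfl | hm
    · simp
    · have h2 : (2 : ℝ) ≤ 2 ^ m := le_self_pow₀ one_le_two hm.ne'
      exact mul_nonneg (by linarith) (by linarith)
  calc (4 : ℝ) ^ m = (2 ^ m) ^ 2 := by
        rw [pow_right_comm]
        norm_num
    _ ≤ (2 * (2 ^ (m + 1) - 3) + 1) ^ 2 := by
        rw [pow_succ 2 m]
        nlinarith
    _ ≤ (2 * Real.log 2) * (2 * (2 ^ (m + 1) - 3) + 1) ^ 2 :=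
        le_mul_of_one_le_left (sq_nonneg _) (by linarith [Real.log_two_gt_d9])

/-- Multiprover parallel repetition theorem for sub-nonsignalling strategies
(Lancien–Winter): if `ρ_SNS(G) < 1`, `0 < ν ≤ 1 − ρ_SNS(G)` and
`Δ ≥ ρ_SNS(G) + ν`, then under any sub-nonsignalling strategy the probability of
winning at least `nΔ` of the `n` parallel games is at most `exp(−n ν²/C_m)`,
where `C_m = (2 ln 2)(2(2^{m+1}−3)+1)²` and `m` is the number of provers. -/
theorem multiprover_parallel_repetition
    {ι : Type*} [Fintype ι] [DecidableEq ι] (X U : ι → Type*)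
    [∀ i, Fintype (X i)] [∀ i, DecidableEq (X i)]
    [∀ i, Fintype (U i)] [∀ i, DecidableEq (U i)] [∀ i, Nonempty (U i)]
    (PX : (∀ i, X i) → ℝ) (hPX : IsPmf PX)
    (ω : (∀ i, X i) → (∀ i, U i) → ℝ) (hω : ∀ x u, ω x u = 0 ∨ ω x u = 1)
    (hval : sSup (snsSet X U PX ω) < 1)
    (ν : ℝ) (hν : 0 < ν) (hν1 : ν ≤ 1 - sSup (snsSet X U PX ω))
    (Δ : ℝ) (hΔ : sSup (snsSet X U PX ω) + ν ≤ Δ)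
    (n : ℕ) (hn : 1 ≤ n)
    (K : (∀ i, Fin n → X i) → (∀ i, Fin n → U i) → ℝ)
    (hK : IsSNS (X := fun i => Fin n → X i) (U := fun i => Fin n → U i) K) :
    ∑ z : (∀ i, Fin n → U i) × (∀ i, Fin n → X i),
        (if (n : ℝ) * Δ ≤ ∑ j, ω (fun i => z.2 i j) (fun i => z.1 i j) then
          (∏ j, PX (fun i => z.2 i j)) * K z.2 z.1 else 0)
      ≤ Real.exp (-(n * ν ^ 2 /
          ((2 * Real.log 2) * (2 * (2 ^ (Fintype.card ι + 1) - 3) + 1) ^ 2))) := by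
  exact (multiprover_parallel_repetition_general hPX
    (fun x u => by rcases hω x u with h | h <;> simp [h]) hν.le hΔ hK).trans <|
    Real.exp_le_exp.2 <| neg_le_neg <| div_le_div_of_nonneg_left (by positivity) (by positivity) <|
      four_pow_le_two_mul_log_two_mul_sq _
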